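/- In the setting of the context, assume a_{ss} ≠ 0, a_{rs} ≠ 0, and d := deg(a_{rs}) − deg(a_{ss}) ≥ 0; let c = LC(a_{rs})·LC(a_{ss})^{−1} and b_{rj} = a_{rj} − c·x^d·a_{sj} for 1 ≤ j ≤ r. Then: (A1) deg_u(b_{rr} e_r) = deg_u(a_{rr} e_r); (A2) deg_u(b_{rs} e_s) < deg_u(a_{rs} e_s); (A3) deg_u(b_{rj} e_j) < deg_u(a_{rs} e_s) for s < j < r; (A4) deg_u(b_{rj} e_j) ≤ deg_u(a_{rs} e_s) for j < s. Moreover, for g = Σ_j b_{rj} e_j, deg_u(LT(g)) − deg_u(b_{rr} e_r) ≤ deg_u(LT(g_r)) − deg_u(a_{rr} e_r), with equality only if ind(LT(g)) < ind(LT(g_r)). -/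

import Mathlib

open scoped Classical

/-- `deg_u(a·e_j) = u_x·deg(a) + u_j` for nonzero `a ∈ k[x]`, and `−∞` (`⊥`) for `a = 0`. -/
noncomputable def degu {k : Type*} [Field k] (ux : ℕ) (u : ℕ → ℕ)
    (a : Polynomial k) (j : ℕ) : WithBot ℕ :=
  if a = 0 then ⊥ else ((ux * a.natDegree + u j : ℕ) : WithBot ℕ)

/-- `deg_u(LT(g))` for `g = Σ_{j=1}^r b_j e_j`: the maximum of `deg_u(b_j e_j)`. -/
noncomputable def degLT {k : Type*} [Field k] (ux : ℕ) (u : ℕ → ℕ) (r : ℕ)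
    (b : ℕ → Polynomial k) : WithBot ℕ :=
  (Finset.Icc 1 r).sup fun j => degu ux u (b j) j

/-- `ind(LT(g))` for `g = Σ_{j=1}^r b_j e_j`: the largest index attaining the maximum. -/
noncomputable def indLT {k : Type*} [Field k] (ux : ℕ) (u : ℕ → ℕ) (r : ℕ)
    (b : ℕ → Polynomial k) : ℕ :=
  (((Finset.Icc 1 r).filter fun j => degu ux u (b j) j = degLT ux u r b).sup id)

/-!
Multiplication by `t = c·x^d` raises `deg_u` of every component by
`deg_u(a_{rs} e_s) − deg_u(a_{ss} e_s)`. Hence by (E1) no component of `t·g_s` exceeds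
`deg_u(LT(g_r)) = deg_u(a_{rs} e_s)`, and those of index above `s` stay strictly below it; at index
`s` the leading terms cancel. At index `r`, condition (E3) for the transposition `(s r)` says
exactly that `t·a_{sr}` has smaller degree than `a_{rr}`, so the diagonal degree survives. If the
maximum is still attained after the step, it is therefore attained at an index below `s`.
-/

section SwapSum

variable {ι M : Type*} [AddCommMonoid M] {S : Finset ι} {s r : ι}

theorem sum_apply_swap [DecidableEq ι] (f : ι → ι → M) (hs : s ∈ S) (hr : r ∈ S) (hsr : s ≠ r) :
    ∑ i ∈ S, f i (Equiv.swap s r i) = (f s r + f r s) + ∑ i ∈ S \ {s, r}, f i i := by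
  have hsub : {s, r} ⊆ S := Finset.insert_subset hs (Finset.singleton_subset_iff.2 hr)
  have hfixed : ∑ i ∈ S \ {s, r}, f i (Equiv.swap s r i) = ∑ i ∈ S \ {s, r}, f i i := by
    refine Finset.sum_congr rfl fun i hi => ?_
    simp only [Finset.mem_sdiff, Finset.mem_insert, Finset.mem_singleton, not_or] at hi
    rw [Equiv.swap_apply_of_ne_of_ne hi.2.1 hi.2.2]
  rw [← Finset.sum_sdiff hsub, hfixed, Finset.sum_pair hsr, Equiv.swap_apply_left,
    Equiv.swap_apply_right, add_comm]

theorem add_lt_add_of_sum_apply_swap_lt [DecidableEq ι] [Preorder M] [AddRightReflectLT M]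
    (f : ι → ι → M) (hs : s ∈ S) (hr : r ∈ S) (hsr : s ≠ r)
    (h : ∑ i ∈ S, f i (Equiv.swap s r i) < ∑ i ∈ S, f i i) :
    f s r + f r s < f s s + f r r := by
  have hsub : {s, r} ⊆ S := Finset.insert_subset hs (Finset.singleton_subset_iff.2 hr)
  rw [sum_apply_swap f hs hr hsr, ← Finset.sum_sdiff hsub, Finset.sum_pair hsr,
    add_comm (∑ i ∈ S \ {s, r}, f i i)] at h
  exact lt_of_add_lt_add_right h

theorem add_lt_add_of_forall_bijOn_sum_lt [Preorder M] [AddRightReflectLT M] {f : ι → ι → M}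
    (hs : s ∈ S) (hr : r ∈ S) (hsr : s ≠ r)
    (h : ∀ π : ι → ι, Set.BijOn π S S → (∃ i ∈ (S : Set ι), π i ≠ i) →
      ∑ i ∈ S, f i (π i) < ∑ i ∈ S, f i i) :
    f s r + f r s < f s s + f r r := by
  have hbij : Set.BijOn (Equiv.swap s r) S S := Equiv.swap_bijOn_self (iff_of_true hs hr)
  have hmoved : Equiv.swap s r s ≠ s := by rw [Equiv.swap_apply_left]; exact hsr.symm
  exact add_lt_add_of_sum_apply_swap_lt f hs hr hsr (h _ hbij ⟨s, hs, hmoved⟩)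

end SwapSum

section LeadingTermReduction

open Polynomial

variable {k : Type*} [Field k] {ux : ℕ} {u : ℕ → ℕ}

section WeightedDegree

variable {p q : k[X]} {j : ℕ}

theorem degu_eq_map_degree (ux : ℕ) (u : ℕ → ℕ) (p : k[X]) (j : ℕ) :
    degu ux u p j = p.degree.map (fun n => ux * n + u j) := by
  unfold degu
  split_ifs with hp
  · rw [hp, degree_zero, WithBot.map_bot]
  · rw [degree_eq_natDegree hp]
    rfl

theorem degu_eq_bot_iff : degu ux u p j = ⊥ ↔ p = 0 := by
  rw [degu_eq_map_degree, WithBot.map_eq_bot_iff, degree_eq_bot]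

theorem monotone_map_weight (ux w : ℕ) :
    Monotone (WithBot.map fun n => ux * n + w : WithBot ℕ → WithBot ℕ) :=
  Monotone.withBot_map fun _ _ h => Nat.add_le_add_right (Nat.mul_le_mul_left ux h) w

theorem degu_lt_degu_iff (hux : 0 < ux) : degu ux u p j < degu ux u q j ↔ p.degree < q.degree := by
  have hweight : StrictMono fun n => ux * n + u j := fun _ _ h =>
    Nat.add_lt_add_right (Nat.mul_lt_mul_of_pos_left h hux) (u j)
  rw [degu_eq_map_degree, degu_eq_map_degree, hweight.withBot_map.lt_iff_lt]

theorem degu_sub_le (p q : k[X]) (j : ℕ) :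
    degu ux u (p - q) j ≤ max (degu ux u p j) (degu ux u q j) := by
  simp only [degu_eq_map_degree, ← (monotone_map_weight ux (u j)).map_max]
  exact monotone_map_weight ux (u j) (degree_sub_le p q)

theorem degu_sub_eq_left_of_degu_lt (h : degu ux u q j < degu ux u p j) :
    degu ux u (p - q) j = degu ux u p j := by
  simp only [degu_eq_map_degree] at h ⊢
  rw [degree_sub_eq_left_of_degree_lt ((monotone_map_weight ux (u j)).reflect_lt h)]

theorem degu_mul (hp : p ≠ 0) (q : k[X]) (j : ℕ) :
    degu ux u (p * q) j = ((ux * p.natDegree : ℕ) : WithBot ℕ) + degu ux u q j := by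
  by_cases hq : q = 0
  · simp [degu, hq]
  · simp only [degu, mul_ne_zero hp hq, hq, if_false, natDegree_mul hp hq]
    norm_cast
    ring

end WeightedDegree

section LeadQuotient

/-- The monomial `LC(g)·LC(f)⁻¹·x^(deg g − deg f)`, the ratio of the leading terms of `g` and `f`.
It is meaningful for `f ≠ 0` and `deg f ≤ deg g`; the subtraction of degrees is truncated. -/
noncomputable def leadQuotient (f g : k[X]) : k[X] :=
  C (g.leadingCoeff * f.leadingCoeff⁻¹) * X ^ (g.natDegree - f.natDegree)

variable {f g : k[X]} {i j : ℕ}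

theorem leadQuotient_ne_zero (hf : f ≠ 0) (hg : g ≠ 0) : leadQuotient f g ≠ 0 := by
  simp [leadQuotient, hf, hg]

theorem natDegree_leadQuotient (hf : f ≠ 0) (hg : g ≠ 0) :
    (leadQuotient f g).natDegree = g.natDegree - f.natDegree :=
  natDegree_C_mul_X_pow _ _ (by simp [hf, hg])

theorem degree_sub_leadQuotient_mul_lt (hf : f ≠ 0) (hg : g ≠ 0)
    (hdeg : f.natDegree ≤ g.natDegree) : (g - leadQuotient f g * f).degree < g.degree := by
  have hquot := leadQuotient_ne_zero hf hg
  refine degree_sub_lt_left ?_ hg ?_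
  · rw [degree_eq_natDegree hg, degree_eq_natDegree (mul_ne_zero hquot hf),
      natDegree_mul hquot hf, natDegree_leadQuotient hf hg, Nat.sub_add_cancel hdeg]
  · rw [leadingCoeff_mul, leadQuotient, leadingCoeff_C_mul_X_pow,
      inv_mul_cancel_right₀ (leadingCoeff_ne_zero.2 hf)]

theorem degu_leadQuotient_mul_add (hf : f ≠ 0) (hg : g ≠ 0) (hdeg : f.natDegree ≤ g.natDegree)
    (h : k[X]) (i j : ℕ) :
    degu ux u (leadQuotient f g * h) j + degu ux u f i = degu ux u h j + degu ux u g i := by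
  have hshift : ((ux * (g.natDegree - f.natDegree) : ℕ) : WithBot ℕ) + degu ux u f i
      = degu ux u g i := by
    simp only [degu, hf, hg, if_false]
    norm_cast
    rw [← add_assoc, ← mul_add, Nat.sub_add_cancel hdeg]
  rw [degu_mul (leadQuotient_ne_zero hf hg), natDegree_leadQuotient hf hg, ← hshift]
  abel

theorem degu_leadQuotient_mul_le (hf : f ≠ 0) (hg : g ≠ 0) (hdeg : f.natDegree ≤ g.natDegree)
    {h : k[X]} (hle : degu ux u h j ≤ degu ux u f i) :
    degu ux u (leadQuotient f g * h) j ≤ degu ux u g i := by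
  refine WithBot.le_of_add_le_add_right (mt degu_eq_bot_iff.1 hf : degu ux u f i ≠ ⊥) ?_
  rw [degu_leadQuotient_mul_add hf hg hdeg, add_comm (degu ux u g i)]
  gcongr

theorem degu_leadQuotient_mul_lt_of_add_lt (hf : f ≠ 0) (hg : g ≠ 0)
    (hdeg : f.natDegree ≤ g.natDegree) {h : k[X]} {w : WithBot ℕ}
    (hlt : degu ux u h j + degu ux u g i < degu ux u f i + w) :
    degu ux u (leadQuotient f g * h) j < w := by
  rw [← degu_leadQuotient_mul_add hf hg hdeg, add_comm (degu ux u f i)] at hlt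
  exact lt_of_add_lt_add_right hlt

theorem degu_leadQuotient_mul_lt (hf : f ≠ 0) (hg : g ≠ 0) (hdeg : f.natDegree ≤ g.natDegree)
    {h : k[X]} (hlt : degu ux u h j < degu ux u f i) :
    degu ux u (leadQuotient f g * h) j < degu ux u g i :=
  degu_leadQuotient_mul_lt_of_add_lt hf hg hdeg
    (WithBot.add_lt_add_right (mt degu_eq_bot_iff.1 hg) hlt)

end LeadQuotient

section LeadingIndex

variable {r s : ℕ} {p q b : ℕ → k[X]}

/-- The leading term of `Σ_{j=1}^r p_j e_j` sits at index `s`: this is the shape of the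
conditions (E1) and (E2), where ties are allowed only at indices below `s`. -/
structure IsLeadingIndex (ux : ℕ) (u : ℕ → ℕ) (r s : ℕ) (p : ℕ → k[X]) : Prop where
  one_le : 1 ≤ s
  le : s ≤ r
  degu_lt : ∀ j, s < j → j ≤ r → degu ux u (p j) j < degu ux u (p s) s
  degu_le : ∀ j, 1 ≤ j → j < s → degu ux u (p j) j ≤ degu ux u (p s) s

theorem degu_le_degLT {j : ℕ} (hj : 1 ≤ j) (hjr : j ≤ r) :
    degu ux u (p j) j ≤ degLT ux u r p :=
  Finset.le_sup (f := fun j => degu ux u (p j) j) (Finset.mem_Icc.2 ⟨hj, hjr⟩)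

theorem indLT_lt_iff (hs : 1 ≤ s) :
    indLT ux u r p < s ↔ ∀ j, s ≤ j → j ≤ r → degu ux u (p j) j < degLT ux u r p := by
  rw [indLT, Finset.sup_lt_iff (show ⊥ < s from hs)]
  simp only [Finset.mem_filter, Finset.mem_Icc, id_eq]
  constructor
  · intro h j hsj hjr
    refine (degu_le_degLT (hs.trans hsj) hjr).lt_of_ne fun heq => ?_
    exact (h j ⟨⟨hs.trans hsj, hjr⟩, heq⟩).not_ge hsj
  · rintro h j ⟨⟨-, hjr⟩, heq⟩
    exact lt_of_not_ge fun hsj => (h j hsj hjr).ne heq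

namespace IsLeadingIndex

theorem degLT_eq (hp : IsLeadingIndex ux u r s p) : degLT ux u r p = degu ux u (p s) s := by
  refine le_antisymm (Finset.sup_le fun j hj => ?_) (degu_le_degLT hp.one_le hp.le)
  obtain ⟨hj, hjr⟩ := Finset.mem_Icc.1 hj
  rcases lt_trichotomy j s with hjs | rfl | hsj
  · exact hp.degu_le j hj hjs
  · exact le_rfl
  · exact (hp.degu_lt j hsj hjr).le

theorem indLT_eq (hp : IsLeadingIndex ux u r s p) : indLT ux u r p = s := by
  refine le_antisymm (Nat.le_of_lt_succ ?_) (le_of_not_gt fun hlt => ?_)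
  · rw [indLT_lt_iff (Nat.le_add_left 1 s), hp.degLT_eq]
    exact hp.degu_lt
  · rw [indLT_lt_iff hp.one_le, hp.degLT_eq] at hlt
    exact (hlt s le_rfl hp.le).false

theorem ne_zero (hp : IsLeadingIndex ux u r s p) (hsr : s < r) : p s ≠ 0 :=
  mt degu_eq_bot_iff.2 (hp.degu_lt r hsr le_rfl).ne_bot

theorem degLT_le_degLT (hq : IsLeadingIndex ux u r s q)
    (hle : ∀ j, 1 ≤ j → j ≤ r → degu ux u (b j) j ≤ degu ux u (q s) s) :
    degLT ux u r b ≤ degLT ux u r q := by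
  rw [hq.degLT_eq]
  exact Finset.sup_le fun j hj => hle j (Finset.mem_Icc.1 hj).1 (Finset.mem_Icc.1 hj).2

theorem indLT_lt_indLT (hq : IsLeadingIndex ux u r s q)
    (hlt : ∀ j, s ≤ j → j ≤ r → degu ux u (b j) j < degu ux u (q s) s)
    (heq : degLT ux u r b = degLT ux u r q) : indLT ux u r b < indLT ux u r q := by
  rw [hq.indLT_eq, indLT_lt_iff hq.one_le, heq, hq.degLT_eq]
  exact hlt

end IsLeadingIndex

end LeadingIndex

section ReduceAt

variable {s j : ℕ} {p q : ℕ → k[X]}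

/-- The one-step update of `q = g_r` by `p = g_s`: the multiple of `p` that cancels the leading
term of the component of index `s` is subtracted from `q`. -/
noncomputable def reduceAt (s : ℕ) (p q : ℕ → k[X]) (j : ℕ) : k[X] :=
  q j - leadQuotient (p s) (q s) * p j

theorem degu_reduceAt_eq (hps : p s ≠ 0) (hqs : q s ≠ 0)
    (hdeg : (p s).natDegree ≤ (q s).natDegree)
    (hswap : degu ux u (p j) j + degu ux u (q s) s < degu ux u (p s) s + degu ux u (q j) j) :
    degu ux u (reduceAt s p q j) j = degu ux u (q j) j :=
  degu_sub_eq_left_of_degu_lt (degu_leadQuotient_mul_lt_of_add_lt hps hqs hdeg hswap)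

theorem degu_reduceAt_self_lt (hux : 0 < ux) (hps : p s ≠ 0) (hqs : q s ≠ 0)
    (hdeg : (p s).natDegree ≤ (q s).natDegree) :
    degu ux u (reduceAt s p q s) s < degu ux u (q s) s :=
  (degu_lt_degu_iff hux).2 (degree_sub_leadQuotient_mul_lt hps hqs hdeg)

theorem degu_reduceAt_lt (hps : p s ≠ 0) (hqs : q s ≠ 0)
    (hdeg : (p s).natDegree ≤ (q s).natDegree)
    (hp : degu ux u (p j) j < degu ux u (p s) s) (hq : degu ux u (q j) j < degu ux u (q s) s) :
    degu ux u (reduceAt s p q j) j < degu ux u (q s) s :=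
  (degu_sub_le _ _ j).trans_lt (max_lt hq (degu_leadQuotient_mul_lt hps hqs hdeg hp))

theorem degu_reduceAt_le (hps : p s ≠ 0) (hqs : q s ≠ 0)
    (hdeg : (p s).natDegree ≤ (q s).natDegree)
    (hp : degu ux u (p j) j ≤ degu ux u (p s) s) (hq : degu ux u (q j) j ≤ degu ux u (q s) s) :
    degu ux u (reduceAt s p q j) j ≤ degu ux u (q s) s :=
  (degu_sub_le _ _ j).trans (max_le hq (degu_leadQuotient_mul_le hps hqs hdeg hp))

end ReduceAt

theorem stmt_15_general {r s : ℕ} {p q : ℕ → k[X]} (hux : 0 < ux) (hsr : s < r)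
    (hp : IsLeadingIndex ux u r s p) (hq : IsLeadingIndex ux u r s q)
    (hswap : degu ux u (p r) r + degu ux u (q s) s < degu ux u (p s) s + degu ux u (q r) r)
    (hdeg : (p s).natDegree ≤ (q s).natDegree) :
    degu ux u (reduceAt s p q r) r = degu ux u (q r) r ∧
    degu ux u (reduceAt s p q s) s < degu ux u (q s) s ∧
    (∀ j, s < j → j < r → degu ux u (reduceAt s p q j) j < degu ux u (q s) s) ∧
    (∀ j, 1 ≤ j → j < s → degu ux u (reduceAt s p q j) j ≤ degu ux u (q s) s) ∧
    degLT ux u r (reduceAt s p q) + degu ux u (q r) r ≤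
      degLT ux u r q + degu ux u (reduceAt s p q r) r ∧
    (degLT ux u r (reduceAt s p q) + degu ux u (q r) r =
        degLT ux u r q + degu ux u (reduceAt s p q r) r →
      indLT ux u r (reduceAt s p q) < indLT ux u r q) := by
  have hps : p s ≠ 0 := hp.ne_zero hsr
  have hqs : q s ≠ 0 := hq.ne_zero hsr
  have hqr : degu ux u (q r) r ≠ ⊥ := fun hbot => by simp [hbot] at hswap
  have hdiag := degu_reduceAt_eq hps hqs hdeg hswap
  have hself := degu_reduceAt_self_lt (u := u) hux hps hqs hdeg
  have hbelow : ∀ j, 1 ≤ j → j < s → degu ux u (reduceAt s p q j) j ≤ degu ux u (q s) s :=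
    fun j hj hjs => degu_reduceAt_le hps hqs hdeg (hp.degu_le j hj hjs) (hq.degu_le j hj hjs)
  have habove : ∀ j, s < j → j ≤ r → degu ux u (reduceAt s p q j) j < degu ux u (q s) s :=
    fun j hsj hjr => degu_reduceAt_lt hps hqs hdeg (hp.degu_lt j hsj hjr) (hq.degu_lt j hsj hjr)
  have hfrom : ∀ j, s ≤ j → j ≤ r → degu ux u (reduceAt s p q j) j < degu ux u (q s) s :=
    fun j hsj hjr => hsj.eq_or_lt.elim (fun h => h ▸ hself) fun h => habove j h hjr
  have hle : degLT ux u r (reduceAt s p q) ≤ degLT ux u r q := hq.degLT_le_degLT fun j hj hjr =>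
    (lt_or_ge j s).elim (hbelow j hj) fun hsj => (hfrom j hsj hjr).le
  refine ⟨hdiag, hself, fun j hsj hjr => habove j hsj hjr.le, hbelow, ?_, fun heq => ?_⟩
  · rw [hdiag]
    gcongr
  · rw [hdiag] at heq
    exact hq.indLT_lt_indLT hfrom (WithBot.add_right_cancel hqr heq)

end LeadingTermReduction

/-- Proposition 4 (case `d ≥ 0`): the one-step update `g = g_r − c·x^d·g_s` satisfies
(A1)–(A4), and `deg_u(LT(g)) − deg_u(b_{rr} e_r) ≤ deg_u(LT(g_r)) − deg_u(a_{rr} e_r)`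
(stated additively), with equality only if `ind(LT(g)) < ind(LT(g_r))`. -/
theorem stmt_15 (k : Type*) [Field k] (m : ℕ) (hm : 1 ≤ m)
    (ux : ℕ) (hux : 0 < ux) (u : ℕ → ℕ) (hupos : ∀ i, 0 < u i)
    (r s : ℕ) (hs : 1 ≤ s) (hsr : s < r) (hrm : r ≤ m)
    (a : ℕ → ℕ → Polynomial k)
    -- (E1)
    (hE1 : ∀ j, s < j → j ≤ r → degu ux u (a s j) j < degu ux u (a s s) s)
    (hE1' : ∀ j', 1 ≤ j' → j' < s → degu ux u (a s j') j' ≤ degu ux u (a s s) s)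
    -- (E2)
    (hE2 : ∀ j, s < j → j ≤ r → degu ux u (a r j) j < degu ux u (a r s) s)
    (hE2' : ∀ j', 1 ≤ j' → j' < s → degu ux u (a r j') j' ≤ degu ux u (a r s) s)
    -- (E3)
    (hE3 : ∀ π : ℕ → ℕ, Set.BijOn π (Set.Icc 1 r) (Set.Icc 1 r) →
      (∃ i ∈ Set.Icc 1 r, π i ≠ i) →
      ∑ i ∈ Finset.Icc 1 r, degu ux u (a i (π i)) (π i) <
        ∑ i ∈ Finset.Icc 1 r, degu ux u (a i i) i)
    (hass : a s s ≠ 0) (hars : a r s ≠ 0)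
    (hd : (a s s).natDegree ≤ (a r s).natDegree)
    (d : ℕ) (hdd : d = (a r s).natDegree - (a s s).natDegree)
    (c : k) (hc : c = (a r s).leadingCoeff * (a s s).leadingCoeff⁻¹)
    (b : ℕ → Polynomial k)
    (hb : ∀ j, b j = a r j - Polynomial.C c * Polynomial.X ^ d * a s j) :
    -- (A1)
    degu ux u (b r) r = degu ux u (a r r) r ∧
    -- (A2)
    degu ux u (b s) s < degu ux u (a r s) s ∧
    -- (A3)
    (∀ j, s < j → j < r → degu ux u (b j) j < degu ux u (a r s) s) ∧
    -- (A4)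
    (∀ j, 1 ≤ j → j < s → degu ux u (b j) j ≤ degu ux u (a r s) s) ∧
    -- final claim, stated additively
    degLT ux u r b + degu ux u (a r r) r ≤ degLT ux u r (a r) + degu ux u (b r) r ∧
    (degLT ux u r b + degu ux u (a r r) r = degLT ux u r (a r) + degu ux u (b r) r →
      indLT ux u r b < indLT ux u r (a r)) := by
  subst hdd hc
  obtain rfl : b = reduceAt s (a s) (a r) := funext hb
  have hswap := add_lt_add_of_forall_bijOn_sum_lt (f := fun i j => degu ux u (a i j) j)
    (Finset.mem_Icc.2 ⟨hs, hsr.le⟩) (Finset.mem_Icc.2 ⟨hs.trans hsr.le, le_rfl⟩) hsr.ne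
    (by rwa [Finset.coe_Icc])
  exact stmt_15_general hux hsr ⟨hs, hsr.le, hE1, hE1'⟩ ⟨hs, hsr.le, hE2, hE2'⟩ hswap hd
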